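/- arXiv:2510.25341 — 10 statements merged into one kernel-verified Lean document; each statement's English description precedes it below -/
import Mathlib

section
/- If R is a √J-clean ring, then 2 ∈ J(R). -/
/-- `√J(R)`: the set of elements some positive power of which lies in the
Jacobson radical `J(R)` of the ring `R`. -/
def sqrtJ (R : Type*) [Ring R] : Set R :=
  {z : R | ∃ n : ℕ, 1 ≤ n ∧ z ^ n ∈ (⊥ : TwoSidedIdeal R).jacobson}

/-- `R` is a `√J`-clean ring: every element is the sum of an idempotent and an
element of `√J(R)`. -/
def IsSqrtJCleanRing (R : Type*) [Ring R] : Prop :=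
  ∀ a : R, ∃ e z : R, IsIdempotentElem e ∧ z ∈ sqrtJ R ∧ a = e + z

/-- `R` is a strongly `√J`-clean ring: every element is the sum of an idempotent
and an element of `√J(R)` that commute with each other. -/
def IsStronglySqrtJCleanRing (R : Type*) [Ring R] : Prop :=
  ∀ a : R, ∃ e z : R, IsIdempotentElem e ∧ z ∈ sqrtJ R ∧ a = e + z ∧ e * z = z * e

/-- `R` is a uniquely `√J`-clean ring: every element is uniquely the sum of an
idempotent and an element of `√J(R)`. -/
def IsUniquelySqrtJCleanRing (R : Type*) [Ring R] : Prop :=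
  ∀ a : R, ∃! p : R × R, IsIdempotentElem p.1 ∧ p.2 ∈ sqrtJ R ∧ a = p.1 + p.2

/-- `R` is a uniquely clean ring: every element is uniquely the sum of an
idempotent and a unit. -/
def IsUniquelyCleanRing (R : Type*) [Ring R] : Prop :=
  ∀ a : R, ∃! p : R × R, IsIdempotentElem p.1 ∧ IsUnit p.2 ∧ a = p.1 + p.2

/-!
If an idempotent `e` commutes with `z`, then `a = e + z` satisfies `a ^ 2 - a = z * (2 * e + z - 1)`
with commuting factors, so `a ^ 2 - a ∈ √J(R)` as soon as `z ∈ √J(R)`. For `a = 2` this element is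
`2` itself. It is central, and central elements of `√J(R)` lie in `J(R)`, because a maximal left
ideal behaves like a prime ideal with respect to central elements.
-/

section Ring

variable {R : Type*} [Ring R]

theorem mem_or_mem_of_mul_mem_of_mem_center {M : Ideal R} (hM : M.IsMaximal) {a c : R}
    (hc : c ∈ Subring.center R) (hac : a * c ∈ M) : a ∈ M ∨ c ∈ M := by
  have comm (x : R) : x * c = c * x := Subring.mem_center_iff.mp hc x
  rw [or_iff_not_imp_left]
  intro ha
  obtain ⟨r, m, hm, hrm⟩ := hM.exists_inv ha
  have hc_eq : c = r * (a * c) + c * m := by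
    rw [← mul_assoc, comm, ← mul_add, hrm, mul_one]
  rw [hc_eq]
  exact M.add_mem (M.mul_mem_left r hac) (M.mul_mem_left c hm)

theorem mem_of_pow_mem_of_mem_center {M : Ideal R} (hM : M.IsMaximal) {c : R}
    (hc : c ∈ Subring.center R) {n : ℕ} (hcn : c ^ n ∈ M) : c ∈ M := by
  induction n with
  | zero => exact absurd (M.eq_top_iff_one.mpr (pow_zero c ▸ hcn)) hM.ne_top
  | succ n ih =>
    rw [pow_succ] at hcn
    exact (mem_or_mem_of_mul_mem_of_mem_center hM hc hcn).elim ih id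

theorem mem_jacobson_of_pow_mem_of_mem_center {I : Ideal R} {c : R} (hc : c ∈ Subring.center R)
    {n : ℕ} (hcn : c ^ n ∈ I.jacobson) : c ∈ I.jacobson :=
  Ideal.mem_sInf.mpr fun _ hM =>
    mem_of_pow_mem_of_mem_center hM.2 hc (Ideal.mem_sInf.mp hcn hM)

theorem mem_jacobson_of_mem_sqrtJ_of_mem_center {c : R} (hcJ : c ∈ sqrtJ R)
    (hc : c ∈ Subring.center R) : c ∈ (⊥ : TwoSidedIdeal R).jacobson := by
  obtain ⟨n, -, hcn⟩ := hcJ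
  rw [← TwoSidedIdeal.mem_asIdeal, TwoSidedIdeal.asIdeal_jacobson] at hcn ⊢
  exact mem_jacobson_of_pow_mem_of_mem_center hc hcn

theorem mul_mem_sqrtJ {z b : R} (hz : z ∈ sqrtJ R) (hzb : Commute z b) : z * b ∈ sqrtJ R := by
  obtain ⟨n, hn, hzn⟩ := hz
  refine ⟨n, hn, ?_⟩
  rw [hzb.mul_pow]
  exact TwoSidedIdeal.mul_mem_right _ _ _ hzn

theorem add_sq_sub_add_eq_mul {e z : R} (he : IsIdempotentElem e) (hez : Commute e z) :
    (e + z) ^ 2 - (e + z) = z * (2 * e + z - 1) := by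
  simp only [sq, add_mul, mul_add, mul_sub, mul_one, two_mul, he.eq, hez.eq]
  abel

theorem add_sq_sub_add_mem_sqrtJ {e z : R} (he : IsIdempotentElem e) (hz : z ∈ sqrtJ R)
    (hez : Commute e z) : (e + z) ^ 2 - (e + z) ∈ sqrtJ R := by
  have comm : Commute z (2 * e + z - 1) :=
    (((Commute.ofNat_right z 2).mul_right hez.symm).add_right (.refl z)).sub_right (.one_right z)
  rw [add_sq_sub_add_eq_mul he hez]
  exact mul_mem_sqrtJ hz comm

theorem add_sq_sub_add_mem_jacobson_of_add_mem_center {e z : R}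
    (he : IsIdempotentElem e) (hz : z ∈ sqrtJ R) (hc : e + z ∈ Subring.center R) :
    (e + z) ^ 2 - (e + z) ∈ (⊥ : TwoSidedIdeal R).jacobson := by
  have he_add : Commute e (e + z) := Subring.mem_center_iff.mp hc e
  have hez : Commute e z := by
    simpa only [add_sub_cancel_left] using he_add.sub_right (Commute.refl e)
  exact mem_jacobson_of_mem_sqrtJ_of_mem_center (add_sq_sub_add_mem_sqrtJ he hz hez)
    (sub_mem (pow_mem hc 2) hc)

theorem two_mem_jacobson_of_sqrtJClean_general {e z : R} (he : IsIdempotentElem e)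
    (hz : z ∈ sqrtJ R) (h2 : 2 = e + z) : (2 : R) ∈ (⊥ : TwoSidedIdeal R).jacobson := by
  have hc : e + z ∈ Subring.center R := h2 ▸ ofNat_mem _ 2
  have hJ : (2 : R) ^ 2 - 2 ∈ (⊥ : TwoSidedIdeal R).jacobson :=
    h2 ▸ add_sq_sub_add_mem_jacobson_of_add_mem_center he hz hc
  have two_sq_sub_two : (2 : R) ^ 2 - 2 = 2 := by norm_num
  rwa [two_sq_sub_two] at hJ

end Ring

theorem two_mem_jacobson_of_sqrtJClean (R : Type*) [Ring R]
    (h : IsSqrtJCleanRing R) : (2 : R) ∈ (⊥ : TwoSidedIdeal R).jacobson := by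
  obtain ⟨e, z, he, hz, h2⟩ := h 2
  exact two_mem_jacobson_of_sqrtJClean_general he hz h2
end

section
/- If R is a √J-clean ring and φ : R → S is a surjective ring homomorphism, then S is a √J-clean ring. -/
theorem mem_jacobson_bot_iff_mem_ringJacobson {R : Type*} [Ring R] {x : R} :
    x ∈ (⊥ : TwoSidedIdeal R).jacobson ↔ x ∈ Ring.jacobson R := by
  rw [← TwoSidedIdeal.mem_asIdeal, TwoSidedIdeal.asIdeal_jacobson, TwoSidedIdeal.bot_asIdeal,
    Ideal.jacobson_bot]

theorem mem_sqrtJ_iff_pow_mem_ringJacobson {R : Type*} [Ring R] {z : R} :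
    z ∈ sqrtJ R ↔ ∃ n : ℕ, 1 ≤ n ∧ z ^ n ∈ Ring.jacobson R :=
  exists_congr fun _ ↦ and_congr_right fun _ ↦ mem_jacobson_bot_iff_mem_ringJacobson

theorem map_mem_sqrtJ_of_surjective {R S : Type*} [Ring R] [Ring S] {φ : R →+* S}
    (hφ : Function.Surjective φ) {z : R} (hz : z ∈ sqrtJ R) : φ z ∈ sqrtJ S := by
  rw [mem_sqrtJ_iff_pow_mem_ringJacobson] at hz ⊢
  obtain ⟨n, hn, hzn⟩ := hz
  have : RingHomSurjective φ := ⟨hφ⟩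
  -- Maximal left ideals of `S` pull back along `φ` to maximal left ideals of `R`.
  have map_pow_mem : φ (z ^ n) ∈ Ring.jacobson S := Ring.le_comap_jacobson φ hzn
  exact ⟨n, hn, map_pow φ z n ▸ map_pow_mem⟩

theorem isSqrtJCleanRing_of_surjective (R S : Type*) [Ring R] [Ring S]
    (φ : R →+* S) (hφ : Function.Surjective φ) (h : IsSqrtJCleanRing R) :
    IsSqrtJCleanRing S := by
  intro b
  obtain ⟨a, rfl⟩ := hφ b
  obtain ⟨e, z, he, hz, rfl⟩ := h a
  exact ⟨φ e, φ z, he.map φ, map_mem_sqrtJ_of_surjective hφ hz, map_add φ e z⟩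
end

section
/- Every √J-clean ring is a clean ring; that is, if R is √J-clean then every element of R can be written as the sum of an idempotent and a unit. -/
/-!
If `z ^ n ∈ J(R)`, then `(-z) ^ n ∈ J(R)`, so `1 - (-z) ^ n` is a unit; it is the product of
`1 + z` with a geometric sum commuting with it, so `1 + z` is a unit as well. A decomposition
`a - 1 = e + z` therefore yields the clean decomposition `a = e + (1 + z)`.
-/

section Ring

variable {R : Type*} [Ring R]

theorem exists_mul_eq_one_of_sub_one_mem_jacobson {r : R} (h : r - 1 ∈ Ring.jacobson R) :
    ∃ s : R, s * r = 1 := by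
  rw [← Ideal.jacobson_bot] at h
  obtain ⟨s, hs⟩ := Ideal.exists_mul_sub_mem_of_sub_one_mem_jacobson r h
  exact ⟨s, sub_eq_zero.mp hs⟩

theorem isUnit_of_sub_one_mem_jacobson {r : R} (h : r - 1 ∈ Ring.jacobson R) : IsUnit r := by
  obtain ⟨s, hsr⟩ := exists_mul_eq_one_of_sub_one_mem_jacobson h
  -- The left inverse `s` is again `1` modulo `J(R)`, so it has a left inverse of its own.
  have hs : s - 1 ∈ Ring.jacobson R := by
    have hs_eq : s - 1 = -(s * (r - 1)) := by rw [mul_sub, hsr, mul_one, neg_sub]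
    exact hs_eq ▸ neg_mem (Ideal.mul_mem_left _ s h)
  obtain ⟨t, hts⟩ := exists_mul_eq_one_of_sub_one_mem_jacobson hs
  have htr : t = r := left_inv_eq_right_inv hts hsr
  exact isUnit_iff_exists.mpr ⟨s, htr ▸ hts, hsr⟩

theorem isUnit_one_sub_of_isUnit_one_sub_pow {x : R} {n : ℕ} (h : IsUnit (1 - x ^ n)) :
    IsUnit (1 - x) := by
  have hcomm : Commute (1 - x) (∑ i ∈ Finset.range n, x ^ i) :=
    (mul_neg_geom_sum x n).trans (geom_sum_mul_neg x n).symm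
  rw [← mul_neg_geom_sum] at h
  exact (hcomm.isUnit_mul_iff.mp h).1

theorem asIdeal_jacobson_bot :
    TwoSidedIdeal.asIdeal (⊥ : TwoSidedIdeal R).jacobson = Ring.jacobson R := by
  rw [TwoSidedIdeal.asIdeal_jacobson, TwoSidedIdeal.bot_asIdeal, Ideal.jacobson_bot]

theorem neg_mem_sqrtJ {z : R} (hz : z ∈ sqrtJ R) : -z ∈ sqrtJ R := by
  obtain ⟨n, hn, hzn⟩ := hz
  exact ⟨n, hn, neg_pow z n ▸ TwoSidedIdeal.mul_mem_left _ _ _ hzn⟩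

theorem isUnit_one_sub_of_mem_sqrtJ {z : R} (hz : z ∈ sqrtJ R) : IsUnit (1 - z) := by
  obtain ⟨n, -, hzn⟩ := hz
  rw [← TwoSidedIdeal.mem_asIdeal, asIdeal_jacobson_bot] at hzn
  have hsub : 1 - z ^ n - 1 ∈ Ring.jacobson R := by
    rw [sub_sub_cancel_left]
    exact neg_mem hzn
  exact isUnit_one_sub_of_isUnit_one_sub_pow (isUnit_of_sub_one_mem_jacobson hsub)

theorem isUnit_one_add_of_mem_sqrtJ {z : R} (hz : z ∈ sqrtJ R) : IsUnit (1 + z) :=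
  sub_neg_eq_add 1 z ▸ isUnit_one_sub_of_mem_sqrtJ (neg_mem_sqrtJ hz)

end Ring

theorem isClean_of_isSqrtJClean (R : Type*) [Ring R] (h : IsSqrtJCleanRing R) :
    ∀ a : R, ∃ e u : R, IsIdempotentElem e ∧ IsUnit u ∧ a = e + u := by
  intro a
  obtain ⟨e, z, he, hz, ha⟩ := h (a - 1)
  refine ⟨e, 1 + z, he, isUnit_one_add_of_mem_sqrtJ hz, ?_⟩
  rw [add_left_comm, ← ha, add_sub_cancel]
end

section
/- If R is a √J-clean ring in which every idempotent is central (R is abelian), then √J(R) = J(R), i.e., every element z with z^n ∈ J(R) for some n ≥ 1 already lies in J(R). -/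
/-!
A `√J`-clean ring is clean, because `z - 1` is a unit for every `z ∈ √J(R)`. In an abelian clean
ring, let `z ^ n ∈ J(R)` and write `1 - y * z = e + u` with `e` a central idempotent and `u` a unit.
In the corner ring `e * R` this reads `-(y * z) = u`, so `z` is left invertible there; hence so is
`z ^ n`, which puts `e` in `J(R)` and forces `e = 0`. Thus `1 - y * z` is a unit for every `y`, that
is, `z ∈ J(R)`.
-/

/-- `R` is a clean ring: every element is the sum of an idempotent and a unit. This is the common
weakening of `√J`-cleanness and unique cleanness for which `√J(R) = J(R)` is proved in the abelian
case; as opposed to strong cleanness, the two summands need not commute. -/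
def IsCleanRing (R : Type*) [Ring R] : Prop :=
  ∀ a : R, ∃ e u : R, IsIdempotentElem e ∧ IsUnit u ∧ a = e + u

theorem pow_mul_pow_mul_eq_of_mul_mul_eq {M : Type*} [Monoid M] {x z e : M} (hze : Commute z e)
    (hxze : x * z * e = e) (n : ℕ) : x ^ n * z ^ n * e = e := by
  induction n with
  | zero => simp only [pow_zero, one_mul]
  | succ n ih =>
    calc x ^ (n + 1) * z ^ (n + 1) * e
        = x ^ n * (x * z * (z ^ n * e)) := by simp only [pow_succ x, pow_succ' z, mul_assoc]
      _ = x ^ n * (x * z * e * z ^ n) := by rw [(hze.pow_left n).eq, mul_assoc (x * z)]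
      _ = x ^ n * z ^ n * e := by rw [hxze, ← (hze.pow_left n).eq, mul_assoc]
      _ = e := ih

section Ring

variable {R : Type*} [Ring R]

theorem exists_mul_one_sub_eq_one_of_mem_jacobson {x : R}
    (hx : x ∈ (⊥ : TwoSidedIdeal R).jacobson) : ∃ u, u * (1 - x) = 1 := by
  obtain ⟨u, hu⟩ := TwoSidedIdeal.mem_jacobson_iff.mp hx (-1)
  refine ⟨u, sub_eq_zero.mp ?_⟩
  rw [TwoSidedIdeal.mem_bot] at hu
  rw [← hu]
  noncomm_ring

theorem isUnit_one_sub_of_mem_jacobson {x : R} (hx : x ∈ (⊥ : TwoSidedIdeal R).jacobson) :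
    IsUnit (1 - x) := by
  obtain ⟨u, hu⟩ := exists_mul_one_sub_eq_one_of_mem_jacobson hx
  -- `u = 1 - (-u * x)` has the same form as `1 - x`, so it is left invertible too.
  obtain ⟨v, hv⟩ := exists_mul_one_sub_eq_one_of_mem_jacobson
    (TwoSidedIdeal.mul_mem_left _ (-u) x hx)
  have hu' : 1 - -u * x = u := by
    rw [← hu]
    noncomm_ring
  rw [hu'] at hv
  have hvx : v = 1 - x := left_inv_eq_right_inv hv hu
  exact ⟨⟨1 - x, u, hvx ▸ hv, hu⟩, rfl⟩

theorem mem_jacobson_iff_forall_isUnit_one_sub_mul {x : R} :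
    x ∈ (⊥ : TwoSidedIdeal R).jacobson ↔ ∀ y, IsUnit (1 - y * x) := by
  refine ⟨fun hx y => isUnit_one_sub_of_mem_jacobson (TwoSidedIdeal.mul_mem_left _ y x hx),
    fun h => TwoSidedIdeal.mem_jacobson_iff.mpr fun y => ?_⟩
  obtain ⟨u, hu⟩ := (h (-y)).exists_left_inv
  refine ⟨u, (TwoSidedIdeal.mem_bot R).mpr ?_⟩
  rw [← hu]
  noncomm_ring

theorem eq_zero_of_isIdempotentElem_of_mem_jacobson {e : R} (he : IsIdempotentElem e)
    (heJ : e ∈ (⊥ : TwoSidedIdeal R).jacobson) : e = 0 :=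
  (isUnit_one_sub_of_mem_jacobson heJ).mul_right_eq_zero.mp he.one_sub_mul_self

theorem jacobson_subset_sqrtJ : ((⊥ : TwoSidedIdeal R).jacobson : Set R) ⊆ sqrtJ R :=
  fun x hx => ⟨1, le_rfl, (pow_one x).symm ▸ hx⟩

theorem IsSqrtJCleanRing.isCleanRing (h : IsSqrtJCleanRing R) : IsCleanRing R := by
  intro a
  obtain ⟨e, z, he, hz, haez⟩ := h (a + 1)
  refine ⟨e, z - 1, he, IsUnit.sub_iff.mp (isUnit_one_sub_of_mem_sqrtJ hz), ?_⟩
  rw [← add_sub_assoc, ← haez, add_sub_cancel_right]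

theorem eq_zero_of_mul_mul_eq_of_mem_sqrtJ {x z e : R} (he : IsIdempotentElem e)
    (hze : Commute z e) (hxze : x * z * e = e) (hz : z ∈ sqrtJ R) : e = 0 := by
  obtain ⟨n, -, hzn⟩ := hz
  apply eq_zero_of_isIdempotentElem_of_mem_jacobson he
  rw [← pow_mul_pow_mul_eq_of_mul_mul_eq hze hxze n]
  exact TwoSidedIdeal.mul_mem_right _ _ _ (TwoSidedIdeal.mul_mem_left _ _ _ hzn)

end Ring

theorem sqrtJ_eq_jacobson_of_abelian_general (R : Type*) [Ring R]
    (h : IsCleanRing R)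
    (hab : ∀ e : R, IsIdempotentElem e → ∀ x : R, e * x = x * e) :
    sqrtJ R = ((⊥ : TwoSidedIdeal R).jacobson : Set R) := by
  refine Set.Subset.antisymm (fun z hz => ?_) jacobson_subset_sqrtJ
  refine mem_jacobson_iff_forall_isUnit_one_sub_mul.mpr fun y => ?_
  obtain ⟨e, u, he, hu, heu⟩ := h (1 - y * z)
  obtain ⟨v, hvu⟩ := hu.exists_left_inv
  have hyze : y * z * e = -(u * e) := by
    calc y * z * e = (1 - (e + u)) * e := by rw [← heu, sub_sub_cancel]
      _ = e - e * e - u * e := by noncomm_ring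
      _ = -(u * e) := by rw [he.eq, sub_self, zero_sub]
  have hvyze : -v * y * z * e = e := by
    calc -v * y * z * e = -v * (y * z * e) := by simp only [mul_assoc]
      _ = v * u * e := by rw [hyze, neg_mul_neg, mul_assoc]
      _ = e := by rw [hvu, one_mul]
  have he0 : e = 0 := eq_zero_of_mul_mul_eq_of_mem_sqrtJ he (hab e he z).symm hvyze hz
  rwa [heu, he0, zero_add]

theorem sqrtJ_eq_jacobson_of_abelian (R : Type*) [Ring R]
    (h : IsSqrtJCleanRing R)
    (hab : ∀ e : R, IsIdempotentElem e → ∀ x : R, e * x = x * e) :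
    sqrtJ R = ((⊥ : TwoSidedIdeal R).jacobson : Set R) :=
  sqrtJ_eq_jacobson_of_abelian_general R h.isCleanRing hab
end

section
/- Let R be a ring and u a unit of R. Then u is a strongly √J-clean element (i.e., u = e + z with e idempotent, z ∈ √J(R), and ez = ze) if and only if u = 1 + z for some z ∈ √J(R). -/
/-!
Let `u = e + z`. As `1 - e` annihilates `e` and commutes with `z`, we get
`(1 - e) * u ^ n = (1 - e) * z ^ n`, which vanishes modulo `J(R)` for some `n`. If `u` is regular
modulo `J(R)`, this puts `1 - e` in `J(R)`. Hence `e` is left invertible, and a left invertible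
idempotent is `1`.
-/

theorem mul_pow_eq_mul_pow_of_commute {M : Type*} [Monoid M] {f a z : M} (hfz : Commute f z)
    (h : f * a = f * z) (n : ℕ) : f * a ^ n = f * z ^ n := by
  induction n with
  | zero => rw [pow_zero, pow_zero]
  | succ n ih =>
    calc f * a ^ (n + 1) = f * z ^ n * a := by rw [pow_succ, ← mul_assoc, ih]
      _ = z ^ n * (f * z) := by rw [(hfz.pow_right n).eq, mul_assoc, h]
      _ = f * z ^ (n + 1) := by rw [← mul_assoc, ← (hfz.pow_right n).eq, mul_assoc, ← pow_succ]

section Ring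

variable {R : Type*} [Ring R] {e z : R}

theorem eq_one_of_isIdempotentElem_of_isNilpotent_of_isRightRegular_add (he : IsIdempotentElem e)
    (hz : IsNilpotent z) (hez : Commute e z) (hreg : IsRightRegular (e + z)) : e = 1 := by
  obtain ⟨n, hn⟩ := hz
  have hmul : (1 - e) * (e + z) = (1 - e) * z := by
    rw [mul_add, he.one_sub_mul_self, zero_add]
  have hpow : (1 - e) * (e + z) ^ n = 0 := by
    rw [mul_pow_eq_mul_pow_of_commute ((Commute.one_left z).sub_left hez) hmul, hn, mul_zero]
  have hone_sub : 1 - e = 0 := hreg.pow n (hpow.trans (zero_mul _).symm)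
  exact (sub_eq_zero.mp hone_sub).symm

theorem eq_one_of_isIdempotentElem_of_sub_one_mem_jacobson (he : IsIdempotentElem e)
    (hJ : e - 1 ∈ (⊥ : TwoSidedIdeal R).jacobson) : e = 1 := by
  rw [← TwoSidedIdeal.mem_asIdeal, TwoSidedIdeal.asIdeal_jacobson,
    TwoSidedIdeal.bot_asIdeal] at hJ
  obtain ⟨w, hw⟩ := Ideal.exists_mul_sub_mem_of_sub_one_mem_jacobson e hJ
  have hwe : w * e = 1 := sub_eq_zero.mp hw
  exact isLeftRegular_of_mul_eq_one hwe (he.eq.trans (mul_one e).symm)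

theorem ringCon_mk'_eq_zero_iff (I : TwoSidedIdeal R) (x : R) : I.ringCon.mk' x = 0 ↔ x ∈ I := by
  rw [← TwoSidedIdeal.mem_ker, TwoSidedIdeal.ker_ringCon_mk']

theorem mem_sqrtJ_iff_isNilpotent_mk' :
    z ∈ sqrtJ R ↔ IsNilpotent ((⊥ : TwoSidedIdeal R).jacobson.ringCon.mk' z) := by
  simp only [IsNilpotent, ← map_pow, ringCon_mk'_eq_zero_iff]
  constructor
  · rintro ⟨n, -, hn⟩
    exact ⟨n, hn⟩
  · rintro ⟨n, hn⟩
    refine ⟨n + 1, n.succ_pos, ?_⟩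
    rw [pow_succ]
    exact TwoSidedIdeal.mul_mem_right _ _ _ hn

theorem eq_one_of_isIdempotentElem_of_mem_sqrtJ_of_isRightRegular_mk'_add
    (he : IsIdempotentElem e) (hz : z ∈ sqrtJ R) (hez : Commute e z)
    (hreg : IsRightRegular ((⊥ : TwoSidedIdeal R).jacobson.ringCon.mk' (e + z))) : e = 1 := by
  set π := (⊥ : TwoSidedIdeal R).jacobson.ringCon.mk'
  have hπe : π e = 1 :=
    eq_one_of_isIdempotentElem_of_isNilpotent_of_isRightRegular_add (he.map π)
      (mem_sqrtJ_iff_isNilpotent_mk'.mp hz) (hez.map π) (map_add π e z ▸ hreg)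
  refine eq_one_of_isIdempotentElem_of_sub_one_mem_jacobson he ?_
  rw [← ringCon_mk'_eq_zero_iff, map_sub, map_one, sub_eq_zero]
  exact hπe

end Ring

theorem unit_stronglySqrtJClean_iff_general (R : Type*) [Ring R] (u : R)
    (hu : IsRightRegular ((⊥ : TwoSidedIdeal R).jacobson.ringCon.mk' u)) :
    (∃ e z : R, IsIdempotentElem e ∧ z ∈ sqrtJ R ∧ u = e + z ∧ e * z = z * e) ↔
      ∃ z ∈ sqrtJ R, u = 1 + z := by
  constructor
  · rintro ⟨e, z, he, hz, rfl, hez⟩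
    have he_one : e = 1 :=
      eq_one_of_isIdempotentElem_of_mem_sqrtJ_of_isRightRegular_mk'_add he hz hez hu
    exact ⟨z, hz, by rw [he_one]⟩
  · rintro ⟨z, hz, rfl⟩
    exact ⟨1, z, .one, hz, rfl, Commute.one_left z⟩

theorem unit_stronglySqrtJClean_iff (R : Type*) [Ring R] (u : R) (hu : IsUnit u) :
    (∃ e z : R, IsIdempotentElem e ∧ z ∈ sqrtJ R ∧ u = e + z ∧ e * z = z * e) ↔
      ∃ z ∈ sqrtJ R, u = 1 + z :=
  unit_stronglySqrtJClean_iff_general R u (hu.map _).isRegular.right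
end

section
/- A semisimple ring R is a strongly √J-clean ring if and only if R is isomorphic to a finite direct product 𝔽₂ × 𝔽₂ × ⋯ × 𝔽₂ of copies of the field with two elements. -/
/-!
When `J(R) = 0`, strong `√J`-cleanness says that every element is a sum of a commuting idempotent
and nilpotent, so every `a * a - a` is nilpotent. If some `b ≠ 0` had square zero, then, as
`b ∉ J(R)`, some `y * b` would not be nilpotent, and its decomposition would give a nonzero
idempotent in `R * b`. Such an idempotent and `b` generate `2 × 2` matrix units, in which
`!![1, 1; 1, 0]` has `a * a - a = 1`, not nilpotent. So `R` is reduced, hence Boolean, and a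
Noetherian Boolean ring is a finite product of its residue fields, all equal to `𝔽₂`.
-/

/-- Strongly nil-clean rings in the sense of Diesl: every element is the sum of an idempotent and
a nilpotent that commute with each other. When `J(R) = 0` these are the strongly `√J`-clean
rings. -/
def IsStronglyNilCleanRing (R : Type*) [Ring R] : Prop :=
  ∀ a : R, ∃ e z : R, IsIdempotentElem e ∧ IsNilpotent z ∧ a = e + z ∧ Commute e z

section Jacobson

variable {R : Type*} [Ring R]

theorem mem_jacobson_of_forall_isNilpotent_mul {b : R} (hb : ∀ y, IsNilpotent (y * b)) :
    b ∈ Ring.jacobson R := by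
  rw [← Ideal.jacobson_bot, Ideal.mem_jacobson_iff]
  intro y
  obtain ⟨z, hz⟩ := (hb y).isUnit_add_one.exists_left_inv
  refine ⟨z, ?_⟩
  rw [Ideal.mem_bot, sub_eq_zero, mul_assoc, ← mul_add_one, hz]

theorem sqrtJ_eq_setOf_isNilpotent (hJ : Ring.jacobson R = ⊥) : sqrtJ R = {z | IsNilpotent z} := by
  have mem_jacobson_iff (x : R) : x ∈ (⊥ : TwoSidedIdeal R).jacobson ↔ x = 0 := by
    rw [← Ideal.mem_bot, ← hJ, ← Ideal.jacobson_bot, Ideal.mem_jacobson_iff,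
      TwoSidedIdeal.mem_jacobson_iff]
    simp only [TwoSidedIdeal.mem_bot, Ideal.mem_bot]
  ext z
  simp only [sqrtJ, mem_jacobson_iff, Set.mem_ofPred_eq]
  exact ⟨fun ⟨n, _, hn⟩ ↦ ⟨n, hn⟩,
    fun ⟨n, hn⟩ ↦ ⟨n + 1, n.succ_pos, pow_eq_zero_of_le n.le_succ hn⟩⟩

theorem isStronglySqrtJCleanRing_iff_isStronglyNilCleanRing (hJ : Ring.jacobson R = ⊥) :
    IsStronglySqrtJCleanRing R ↔ IsStronglyNilCleanRing R := by
  rw [IsStronglySqrtJCleanRing, sqrtJ_eq_setOf_isNilpotent hJ]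
  rfl

end Jacobson

namespace IsStronglyNilCleanRing

variable {R : Type*} [Ring R]

theorem of_forall_isIdempotentElem (h : ∀ a : R, IsIdempotentElem a) : IsStronglyNilCleanRing R :=
  fun a ↦ ⟨a, 0, h a, .zero, (add_zero a).symm, .zero_right a⟩

theorem isNilpotent_mul_self_sub_self (h : IsStronglyNilCleanRing R) (a : R) :
    IsNilpotent (a * a - a) := by
  obtain ⟨e, z, he, hz, rfl, hez⟩ := h a
  have factorization : (e + z) * (e + z) - (e + z) = z * (2 * e + z - 1) := by
    simp only [mul_add, add_mul, mul_sub, he.eq, two_mul, hez.eq, mul_one]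
    abel
  have hcomm : Commute z (2 * e + z - 1) :=
    (((Commute.ofNat_right z 2).mul_right hez.symm).add_right (.refl z)).sub_right (.one_right z)
  rw [factorization]
  exact hcomm.isNilpotent_mul_right hz

theorem exists_isIdempotentElem_mul (h : IsStronglyNilCleanRing R) {x : R}
    (hx : ¬IsNilpotent x) : ∃ y, IsIdempotentElem (y * x) ∧ y * x ≠ 0 := by
  obtain ⟨e, z, he, hz, rfl, hez⟩ := h x
  obtain ⟨u, hu⟩ := hz.isUnit_one_add.exists_left_inv
  have factorization : u * e * (e + z) = e := by
    calc u * e * (e + z) = u * (1 + z) * e := by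
          simp only [mul_assoc, mul_add, add_mul, he.eq, hez.eq, one_mul]
      _ = e := by rw [hu, one_mul]
  refine ⟨u * e, ?_, ?_⟩ <;> rw [factorization]
  · exact he
  · rintro rfl
    exact hx (by rwa [zero_add])

theorem eq_zero_of_mul_mul_eq_self (h : IsStronglyNilCleanRing R) {c t : R} (hc : c * c = 0)
    (ht : t * t = 0) (hctc : c * t * c = c) (htct : t * c * t = t) : c = 0 := by
  -- `c * t`, `c`, `t`, `t * c` multiply like the matrix units `E₁₁`, `E₁₂`, `E₂₁`, `E₂₂`.
  let a := c * t + c + t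
  have mul_self_sub_self : a * a - a = c * t + t * c := by
    simp only [a, mul_add, add_mul, ← mul_assoc, hctc, htct, hc, mul_assoc c t t, ht,
      mul_zero, zero_mul]
    abel
  have idempotent : IsIdempotentElem (c * t + t * c) := by
    simp only [IsIdempotentElem, mul_add, add_mul, ← mul_assoc, hctc, htct,
      mul_assoc _ c c, mul_assoc _ t t, hc, ht, mul_zero, zero_add, add_zero]
  have eq_zero : c * t + t * c = 0 :=
    idempotent.eq_zero_of_isNilpotent (mul_self_sub_self ▸ h.isNilpotent_mul_self_sub_self a)
  calc c = c * (c * t + t * c) := by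
        rw [mul_add, ← mul_assoc, ← mul_assoc, hc, hctc, zero_mul, zero_add]
    _ = 0 := by rw [eq_zero, mul_zero]

theorem mul_eq_zero_of_isIdempotentElem_mul (h : IsStronglyNilCleanRing R) {b s : R}
    (hb : b * b = 0) (he : IsIdempotentElem (s * b)) : s * b = 0 := by
  let e := s * b
  let c := b * e
  -- The factor `1 - e` makes `t` square to zero, and `e * b = 0` keeps `t * b = e`.
  let t := e * s * (1 - e)
  have e_mul_e : e * e = e := he
  have e_mul_b : e * b = 0 := by rw [mul_assoc, hb, mul_zero]
  have e_mul_t : e * t = t := by rw [← mul_assoc, ← mul_assoc, e_mul_e]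
  have t_mul_e : t * e = 0 := by rw [mul_assoc, sub_mul, one_mul, e_mul_e, sub_self, mul_zero]
  have t_mul_b : t * b = e := by
    rw [mul_assoc, sub_mul, e_mul_b, one_mul, sub_zero, mul_assoc, e_mul_e]
  have t_mul_c : t * c = e := by rw [← mul_assoc, t_mul_b, e_mul_e]
  have c_eq_zero : c = 0 := by
    refine h.eq_zero_of_mul_mul_eq_self (t := t) ?_ ?_ ?_ ?_
    · rw [mul_assoc, ← mul_assoc e, e_mul_b, zero_mul, mul_zero]
    · rw [← e_mul_t, ← mul_assoc, mul_assoc e, t_mul_e, mul_zero, zero_mul]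
    · rw [mul_assoc, t_mul_c, mul_assoc, e_mul_e]
    · rw [t_mul_c, e_mul_t]
  calc e = t * c := t_mul_c.symm
    _ = 0 := by rw [c_eq_zero, mul_zero]

theorem isReduced (h : IsStronglyNilCleanRing R) (hJ : Ring.jacobson R = ⊥) : IsReduced R := by
  refine (isReduced_iff_pow_one_lt 2 one_lt_two).mpr fun b hb ↦ ?_
  rw [sq] at hb
  rw [← Ideal.mem_bot, ← hJ]
  refine mem_jacobson_of_forall_isNilpotent_mul fun y ↦ ?_
  by_contra hy
  obtain ⟨s, he, he_ne⟩ := h.exists_isIdempotentElem_mul hy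
  rw [← mul_assoc] at he he_ne
  exact he_ne (h.mul_eq_zero_of_isIdempotentElem_mul hb he)

end IsStronglyNilCleanRing

theorem isStronglyNilCleanRing_iff_forall_isIdempotentElem {R : Type*} [Ring R]
    (hJ : Ring.jacobson R = ⊥) : IsStronglyNilCleanRing R ↔ ∀ a : R, IsIdempotentElem a := by
  refine ⟨fun h a ↦ ?_, .of_forall_isIdempotentElem⟩
  have := h.isReduced hJ
  exact sub_eq_zero.mp (h.isNilpotent_mul_self_sub_self a).eq_zero

section Boolean

theorem nonempty_ringEquiv_zmod_two_of_forall_isIdempotentElem {D : Type*} [Ring D] [IsDomain D]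
    (h : ∀ a : D, IsIdempotentElem a) : Nonempty (D ≃+* ZMod 2) := by
  classical
  have univ_eq (a : D) : a ∈ ({0, 1} : Finset D) := by
    simpa using IsIdempotentElem.iff_eq_zero_or_one.mp (h a)
  let : Fintype D := ⟨{0, 1}, univ_eq⟩
  exact ⟨(ZMod.ringEquivOfPrime D Nat.prime_two (Finset.card_pair zero_ne_one)).symm⟩

variable {R : Type*} [BooleanRing R]

theorem nonempty_quotient_ringEquiv_zmod_two (I : Ideal R) [I.IsPrime] :
    Nonempty (R ⧸ I ≃+* ZMod 2) :=
  nonempty_ringEquiv_zmod_two_of_forall_isIdempotentElem <|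
    Ideal.Quotient.mk_surjective.forall.mpr fun a ↦ (BooleanRing.isIdempotentElem a).map _

theorem krullDimLE_zero_of_booleanRing : Ring.KrullDimLE 0 R := by
  refine .mk₀ fun I _ ↦ ?_
  obtain ⟨f⟩ := nonempty_quotient_ringEquiv_zmod_two I
  exact Ideal.Quotient.maximal_of_isField I (f.toMulEquiv.isField (Field.toIsField (ZMod 2)))

theorem exists_ringEquiv_pi_zmod_two [IsNoetherianRing R] :
    ∃ n : ℕ, Nonempty (R ≃+* (Fin n → ZMod 2)) := by
  have : Ring.KrullDimLE 0 R := krullDimLE_zero_of_booleanRing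
  have : IsArtinianRing R := isArtinianRing_iff_krullDimLE_zero.mpr this
  have : IsReduced R := ⟨fun a ha ↦ (BooleanRing.isIdempotentElem a).eq_zero_of_isNilpotent ha⟩
  have quotientEquiv (I : MaximalSpectrum R) : Nonempty (R ⧸ I.asIdeal ≃+* ZMod 2) :=
    nonempty_quotient_ringEquiv_zmod_two I.asIdeal
  obtain ⟨n, ⟨σ⟩⟩ := Finite.exists_equiv_fin (MaximalSpectrum R)
  exact ⟨n, ⟨(IsArtinianRing.equivPi R).toRingEquiv.trans <|
    (RingEquiv.piCongrRight fun I ↦ (quotientEquiv I).some).trans <|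
      RingEquiv.piCongrLeft (fun _ ↦ ZMod 2) σ⟩⟩

end Boolean

theorem forall_isIdempotentElem_iff_exists_ringEquiv_pi_zmod_two {R : Type*} [Ring R]
    [IsNoetherianRing R] :
    (∀ a : R, IsIdempotentElem a) ↔ ∃ n : ℕ, Nonempty (R ≃+* (Fin n → ZMod 2)) := by
  constructor
  · intro h
    let : BooleanRing R := { ‹Ring R› with isIdempotentElem := h }
    exact exists_ringEquiv_pi_zmod_two
  · rintro ⟨n, ⟨f⟩⟩ a
    have mul_self : ∀ x : ZMod 2, x * x = x := by decide
    exact f.injective <| (map_mul f a a).trans <| funext fun i ↦ mul_self (f a i)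

theorem semisimple_stronglySqrtJClean_iff_general (R : Type*) [Ring R] [IsNoetherianRing R]
    (hJ : Ring.jacobson R = ⊥) :
    IsStronglySqrtJCleanRing R ↔ ∃ n : ℕ, Nonempty (R ≃+* (Fin n → ZMod 2)) := by
  rw [isStronglySqrtJCleanRing_iff_isStronglyNilCleanRing hJ,
    isStronglyNilCleanRing_iff_forall_isIdempotentElem hJ,
    forall_isIdempotentElem_iff_exists_ringEquiv_pi_zmod_two]

theorem semisimple_stronglySqrtJClean_iff (R : Type*) [Ring R]
    [IsSemisimpleRing R] :
    IsStronglySqrtJCleanRing R ↔ ∃ n : ℕ, Nonempty (R ≃+* (Fin n → ZMod 2)) :=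
  semisimple_stronglySqrtJClean_iff_general R (IsSemisimpleRing.jacobson_eq_bot R)
end

section
/- If R is a uniquely √J-clean ring, then every idempotent of R is central. -/
/-!
If `e` is idempotent and `n = e * x * (1 - e)`, then `n` squares to zero and `e + n` is again
idempotent. So `e + n` splits as `(e + n) + 0` and as `e + n`, both times as an idempotent plus an
element of `√J(R)`, and uniqueness forces `n = 0`, that is, `e * x = e * x * e`. The same for
`1 - e` gives `x * e = e * x * e`.
-/

theorem mem_sqrtJ_of_isNilpotent {R : Type*} [Ring R] {z : R} (hz : IsNilpotent z) :
    z ∈ sqrtJ R := by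
  obtain ⟨k, hk⟩ := hz
  refine ⟨k + 1, Nat.le_add_left 1 k, ?_⟩
  rw [pow_succ, hk, zero_mul]
  exact zero_mem _

theorem IsUniquelySqrtJCleanRing.eq_zero_of_isNilpotent {R : Type*} [Ring R]
    (h : IsUniquelySqrtJCleanRing R) {e n : R} (he : IsIdempotentElem e)
    (hen : IsIdempotentElem (e + n)) (hn : IsNilpotent n) : n = 0 := by
  have pair_eq : (e, n) = (e + n, 0) :=
    (h (e + n)).unique ⟨he, mem_sqrtJ_of_isNilpotent hn, rfl⟩
      ⟨hen, mem_sqrtJ_of_isNilpotent .zero, (add_zero _).symm⟩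
  exact congrArg Prod.snd pair_eq

theorem isIdempotentElem_add_of_mul_add_mul_eq {R : Type*} [NonUnitalNonAssocSemiring R] {e n : R}
    (he : IsIdempotentElem e) (hn : n * n = 0) (hen : e * n + n * e = n) :
    IsIdempotentElem (e + n) :=
  calc (e + n) * (e + n) = e * e + (e * n + n * e) + n * n := by
        simp only [mul_add, add_mul]; abel
    _ = e + n := by rw [he.eq, hen, hn, add_zero]

section PeirceCorner

variable {R : Type*} [Ring R] {e : R}

theorem mul_mul_one_sub_mul_self_eq_zero (he : IsIdempotentElem e) (x : R) :
    e * x * (1 - e) * (e * x * (1 - e)) = 0 :=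
  calc e * x * (1 - e) * (e * x * (1 - e)) = e * x * ((1 - e) * e) * (x * (1 - e)) := by
        simp only [mul_assoc]
    _ = 0 := by rw [he.one_sub_mul_self, mul_zero, zero_mul]

theorem isIdempotentElem_add_mul_mul_one_sub (he : IsIdempotentElem e) (x : R) :
    IsIdempotentElem (e + e * x * (1 - e)) := by
  have left_mul : e * (e * x * (1 - e)) = e * x * (1 - e) := by
    simp only [← mul_assoc, he.eq]
  have right_mul : e * x * (1 - e) * e = 0 := by
    rw [mul_assoc, he.one_sub_mul_self, mul_zero]
  refine isIdempotentElem_add_of_mul_add_mul_eq he (mul_mul_one_sub_mul_self_eq_zero he x) ?_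
  rw [left_mul, right_mul, add_zero]

theorem commute_of_mul_mul_one_sub_eq_zero {x : R} (hl : e * x * (1 - e) = 0)
    (hr : (1 - e) * x * e = 0) : Commute e x := by
  have mul_eq : e * x = e * x * e := by rwa [mul_sub, mul_one, sub_eq_zero] at hl
  have eq_mul : x * e = e * x * e := by rwa [sub_mul, sub_mul, one_mul, sub_eq_zero] at hr
  exact mul_eq.trans eq_mul.symm

end PeirceCorner

theorem idempotents_central_of_uniquelySqrtJClean_general {R : Type*} [Ring R]
    (h : ∀ e n : R, IsIdempotentElem e → IsIdempotentElem (e + n) → n * n = 0 → n = 0)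
    {e : R} (he : IsIdempotentElem e) (x : R) : Commute e x := by
  have corner_eq_zero {f : R} (hf : IsIdempotentElem f) : f * x * (1 - f) = 0 :=
    h f _ hf (isIdempotentElem_add_mul_mul_one_sub hf x) (mul_mul_one_sub_mul_self_eq_zero hf x)
  have complement_corner_eq_zero : (1 - e) * x * e = 0 := by
    simpa only [sub_sub_cancel] using corner_eq_zero he.one_sub
  exact commute_of_mul_mul_one_sub_eq_zero (corner_eq_zero he) complement_corner_eq_zero

theorem idempotents_central_of_uniquelySqrtJClean (R : Type*) [Ring R]
    (h : IsUniquelySqrtJCleanRing R) :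
    ∀ e : R, IsIdempotentElem e → ∀ x : R, e * x = x * e :=
  fun _ he x => (idempotents_central_of_uniquelySqrtJClean_general
    (fun _ _ hf hfn hn => h.eq_zero_of_isNilpotent hf hfn ⟨2, (pow_two _).trans hn⟩) he x).eq
end

section
/- A ring R is both local and strongly √J-clean if and only if the quotient R/J(R) is isomorphic to the field 𝔽₂ with two elements. -/
/-!
Write `J` for the Jacobson radical. In a local ring the only idempotents are `0` and `1`, so
one-sided inverses are two-sided; hence `J` is exactly the set of nonunits, and `√J(R) = J` because
a power of a unit is a unit. A decomposition `a = e + z` then says that `a` is congruent to `0` or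
`1` modulo `J`. Conversely, when this holds for every `a`, elements congruent to `1` are units,
which gives locality, and subtracting `0` or `1` from `a` gives a commuting decomposition.
-/

section UnitsModuloRadical

variable {R : Type*} [Ring R] {x : R}

theorem mem_jacobson_bot_iff_mem_ideal_jacobson_bot :
    x ∈ (⊥ : TwoSidedIdeal R).jacobson ↔ x ∈ (⊥ : Ideal R).jacobson := by
  rw [← TwoSidedIdeal.mem_asIdeal, TwoSidedIdeal.asIdeal_jacobson, TwoSidedIdeal.bot_asIdeal]

theorem exists_mul_eq_one_of_sub_one_mem_jacobson_bot
    (hx : x - 1 ∈ (⊥ : TwoSidedIdeal R).jacobson) : ∃ y, y * x = 1 := by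
  rw [mem_jacobson_bot_iff_mem_ideal_jacobson_bot] at hx
  simpa only [Ideal.mem_bot, sub_eq_zero] using
    Ideal.exists_mul_sub_mem_of_sub_one_mem_jacobson x hx

theorem isUnit_of_sub_one_mem_jacobson_bot
    (hx : x - 1 ∈ (⊥ : TwoSidedIdeal R).jacobson) : IsUnit x := by
  obtain ⟨y, hyx⟩ := exists_mul_eq_one_of_sub_one_mem_jacobson_bot hx
  have hy : y - 1 ∈ (⊥ : TwoSidedIdeal R).jacobson := by
    have hy_sub : y - 1 = -(y * (x - 1)) := by rw [mul_sub, hyx, mul_one, neg_sub]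
    exact hy_sub ▸ neg_mem (TwoSidedIdeal.mul_mem_left _ y _ hx)
  obtain ⟨w, hwy⟩ := exists_mul_eq_one_of_sub_one_mem_jacobson_bot hy
  have hwx : w = x := left_inv_eq_right_inv hwy hyx
  exact ⟨⟨x, y, hwx ▸ hwy, hyx⟩, rfl⟩

theorem not_isUnit_of_mem_jacobson_bot [Nontrivial R]
    (hx : x ∈ (⊥ : TwoSidedIdeal R).jacobson) : ¬IsUnit x := by
  rw [mem_jacobson_bot_iff_mem_ideal_jacobson_bot] at hx
  intro hu
  exact bot_ne_top (Ideal.jacobson_eq_top_iff.1 (Ideal.eq_top_of_isUnit_mem _ hx hu))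

end UnitsModuloRadical

theorem jacobson_bot_subset_sqrtJ {R : Type*} [Ring R] :
    ((⊥ : TwoSidedIdeal R).jacobson : Set R) ⊆ sqrtJ R :=
  fun z hz => ⟨1, le_rfl, (pow_one z).symm ▸ hz⟩

section LocalRing

theorem isDedekindFiniteMonoid_of_forall_isIdempotentElem {M : Type*} [MonoidWithZero M]
    (h : ∀ e : M, IsIdempotentElem e → e = 0 ∨ e = 1) : IsDedekindFiniteMonoid M where
  mul_eq_one_symm {x y} hxy := by
    have hidem : IsIdempotentElem (y * x) := by
      rw [IsIdempotentElem, mul_assoc, ← mul_assoc x, hxy, one_mul]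
    refine (h _ hidem).elim (fun hzero => ?_) id
    have h01 : (0 : M) = 1 := by
      calc (0 : M) = x * (y * x) * y := by rw [hzero, mul_zero, zero_mul]
        _ = x * y * (x * y) := by simp only [mul_assoc]
        _ = 1 := by rw [hxy, one_mul]
    exact eq_of_zero_eq_one h01 _ _

variable {R : Type*} [Ring R] [IsLocalRing R]

theorem eq_zero_or_one_of_isIdempotentElem_of_isLocalRing {e : R} (he : IsIdempotentElem e) :
    e = 0 ∨ e = 1 := by
  rcases IsLocalRing.isUnit_or_isUnit_of_add_one (add_sub_cancel e 1) with hu | hu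
  · exact .inr ((IsIdempotentElem.iff_eq_one_of_isUnit hu).1 he)
  · exact .inl (sub_eq_self.1 ((IsIdempotentElem.iff_eq_one_of_isUnit hu).1 he.one_sub))

theorem isDedekindFiniteMonoid_of_isLocalRing : IsDedekindFiniteMonoid R :=
  isDedekindFiniteMonoid_of_forall_isIdempotentElem fun _ =>
    eq_zero_or_one_of_isIdempotentElem_of_isLocalRing

theorem mem_jacobson_bot_iff_not_isUnit_of_isLocalRing {x : R} :
    x ∈ (⊥ : TwoSidedIdeal R).jacobson ↔ ¬IsUnit x := by
  refine ⟨not_isUnit_of_mem_jacobson_bot, fun hx => TwoSidedIdeal.mem_jacobson_iff.2 fun y => ?_⟩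
  have : IsDedekindFiniteMonoid R := isDedekindFiniteMonoid_of_isLocalRing
  have hyx : ¬IsUnit (-(y * x)) := fun hu =>
    hx (isUnit_of_mul_isUnit_right ((IsUnit.neg_iff _).1 hu))
  have hunit : IsUnit (y * x + 1) :=
    (IsLocalRing.isUnit_or_isUnit_of_add_one (neg_add_cancel_left (y * x) 1)).resolve_left hyx
  obtain ⟨z, hz⟩ := hunit.exists_left_inv
  refine ⟨z, ?_⟩
  rw [TwoSidedIdeal.mem_bot, mul_assoc, ← mul_add_one, hz, sub_self]

theorem sqrtJ_eq_jacobson_bot_of_isLocalRing : sqrtJ R = (⊥ : TwoSidedIdeal R).jacobson := by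
  refine Set.Subset.antisymm (fun z ⟨n, _, hzn⟩ => ?_) jacobson_bot_subset_sqrtJ
  exact mem_jacobson_bot_iff_not_isUnit_of_isLocalRing.2 fun hz =>
    not_isUnit_of_mem_jacobson_bot hzn (hz.pow n)

end LocalRing

theorem nonempty_ringEquiv_zmod_two_iff {S : Type*} [Ring S] :
    Nonempty (S ≃+* ZMod 2) ↔ (0 : S) ≠ 1 ∧ ∀ x : S, x = 0 ∨ x = 1 := by
  classical
  constructor
  · rintro ⟨f⟩
    have hmod : ∀ t : ZMod 2, t = 0 ∨ t = 1 := by decide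
    have := f.toEquiv.nontrivial
    exact ⟨zero_ne_one, fun x => (hmod (f x)).imp (EmbeddingLike.map_eq_zero_iff).1
      (EmbeddingLike.map_eq_one_iff).1⟩
  · rintro ⟨h01, hall⟩
    let : Fintype S := ⟨{0, 1}, fun x => by simpa using hall x⟩
    exact ⟨(ZMod.ringEquivOfPrime S Nat.prime_two (Finset.card_pair h01)).symm⟩

theorem nonempty_quotient_ringEquiv_zmod_two_iff {R : Type*} [Ring R] (I : TwoSidedIdeal R) :
    Nonempty (I.ringCon.Quotient ≃+* ZMod 2) ↔ 1 ∉ I ∧ ∀ a : R, a ∈ I ∨ a - 1 ∈ I := by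
  have hmk (a b : R) : I.ringCon.mk' a = I.ringCon.mk' b ↔ a - b ∈ I :=
    (RingCon.eq _).trans (I.rel_iff a b)
  rw [nonempty_ringEquiv_zmod_two_iff, (RingCon.mk'_surjective (c := I.ringCon)).forall, ne_comm,
    ← map_zero I.ringCon.mk', ← map_one I.ringCon.mk']
  simp only [ne_eq, hmk, sub_zero]

section ResidueTwo

variable {R : Type*} [Ring R]

theorem isLocalRing_of_mem_or_sub_one_mem_jacobson_bot [Nontrivial R]
    (h : ∀ a : R, a ∈ (⊥ : TwoSidedIdeal R).jacobson ∨ a - 1 ∈ (⊥ : TwoSidedIdeal R).jacobson) :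
    IsLocalRing R where
  isUnit_or_isUnit_of_add_one {a b} hab := by
    refine (h a).symm.imp isUnit_of_sub_one_mem_jacobson_bot fun ha => ?_
    have hb : b - 1 = -a := by rw [← hab, sub_add_cancel_right]
    exact isUnit_of_sub_one_mem_jacobson_bot (hb ▸ neg_mem ha)

theorem isStronglySqrtJCleanRing_of_mem_or_sub_one_mem_sqrtJ
    (h : ∀ a : R, a ∈ sqrtJ R ∨ a - 1 ∈ sqrtJ R) : IsStronglySqrtJCleanRing R := fun a =>
  (h a).elim
    (fun ha => ⟨0, a, .zero, ha, (zero_add a).symm, (Commute.zero_left a).eq⟩)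
    (fun ha => ⟨1, a - 1, .one, ha, (add_sub_cancel 1 a).symm, (Commute.one_left _).eq⟩)

theorem IsStronglySqrtJCleanRing.isSqrtJCleanRing (h : IsStronglySqrtJCleanRing R) :
    IsSqrtJCleanRing R := fun a =>
  let ⟨e, z, he, hz, ha, _⟩ := h a
  ⟨e, z, he, hz, ha⟩

theorem IsSqrtJCleanRing.mem_or_sub_one_mem_jacobson_bot [IsLocalRing R] (h : IsSqrtJCleanRing R)
    (a : R) : a ∈ (⊥ : TwoSidedIdeal R).jacobson ∨ a - 1 ∈ (⊥ : TwoSidedIdeal R).jacobson := by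
  obtain ⟨e, z, he, hz, rfl⟩ := h a
  rw [sqrtJ_eq_jacobson_bot_of_isLocalRing] at hz
  rcases eq_zero_or_one_of_isIdempotentElem_of_isLocalRing he with rfl | rfl
  · exact .inl ((zero_add z).symm ▸ hz)
  · exact .inr ((add_sub_cancel_left 1 z).symm ▸ hz)

end ResidueTwo

theorem local_stronglySqrtJClean_iff_quotient_F2_general (R : Type*) [Ring R] :
    List.TFAE [IsLocalRing R ∧ IsStronglySqrtJCleanRing R,
      IsLocalRing R ∧ IsSqrtJCleanRing R,
      Nonempty ((⊥ : TwoSidedIdeal R).jacobson.ringCon.Quotient ≃+* ZMod 2)] := by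
  rw [nonempty_quotient_ringEquiv_zmod_two_iff]
  tfae_have 1 → 2 := And.imp_right IsStronglySqrtJCleanRing.isSqrtJCleanRing
  tfae_have 2 → 3 := fun ⟨_, hclean⟩ =>
    ⟨fun h1 => not_isUnit_of_mem_jacobson_bot h1 isUnit_one, hclean.mem_or_sub_one_mem_jacobson_bot⟩
  tfae_have 3 → 1 := fun ⟨h1, hres⟩ => by
    have : Nontrivial R := nontrivial_of_ne 0 1 fun h01 => h1 (h01 ▸ zero_mem _)
    exact ⟨isLocalRing_of_mem_or_sub_one_mem_jacobson_bot hres,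
      isStronglySqrtJCleanRing_of_mem_or_sub_one_mem_sqrtJ fun a =>
        (hres a).imp (jacobson_bot_subset_sqrtJ ·) (jacobson_bot_subset_sqrtJ ·)⟩
  tfae_finish

theorem local_stronglySqrtJClean_iff_quotient_F2 (R : Type*) [Ring R] :
    (IsLocalRing R ∧ IsStronglySqrtJCleanRing R) ↔
      Nonempty ((⊥ : TwoSidedIdeal R).jacobson.ringCon.Quotient ≃+* ZMod 2) :=
  (local_stronglySqrtJClean_iff_quotient_F2_general R).out 0 2
end

section
/- Let D be a division ring and n ≥ 1. The matrix ring Mₙ(D) of n × n matrices over D is a √J-clean ring if and only if D is isomorphic to the field 𝔽₂ with two elements. -/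
/-!
The Jacobson radical of the simple ring `Mₙ(D)` vanishes, so `√J` is the set of nilpotent elements
and `√J`-clean means nil-clean: every element is an idempotent plus a nilpotent.

Let a rank-one matrix `u qᵀ` be the sum of an idempotent `e` and a nilpotent. Then `e = w (u qᵀ) e`
for some `w`, so `e = v pᵀ` as well. Swapping the two factors in `u qᵀ - v pᵀ = [u v] [q -p]ᵀ` gives
a nilpotent `2 × 2` matrix, whose square is zero; its entries leave only `qᵀ u ∈ {0, 1}`. For
`u = a εᵢ` and `q = εᵢ` this says `a ∈ {0, 1}`.

Over `𝔽₂`, induction on the dimension splits off the cyclic subspace of a vector `v`; nil-cleanness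
of the two diagonal blocks suffices. On the cyclic subspace take the basis `eᵢ = Tⁱ v`, `i ≤ r`. If
`e_{r+1} ≠ 0`, it is `e_m` plus a combination of `eᵢ` with `i < m`. The map `E` with `E eᵢ = 0` for
`i < m`, `E eᵢ = e_m` for `m ≤ i < r` and `E e_r = e_m + e_{r+1} - e_r` is idempotent, and `T - E`
is nilpotent because it shifts `e₀, …, e_m, e_{m+1} - e_m, …, e_r - e_{r-1}, 0`.
-/

section NilClean

/-- An element of a ring is nil-clean if it is the sum of an idempotent and a nilpotent element.
The nilpotent summand is encoded as the difference of the element and the idempotent. -/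
def IsNilClean {R : Type*} [Ring R] (a : R) : Prop :=
  ∃ e : R, IsIdempotentElem e ∧ IsNilpotent (a - e)

variable {R S : Type*} [Ring R] [Ring S]

theorem IsNilClean.of_isNilpotent {a : R} (ha : IsNilpotent a) : IsNilClean a :=
  ⟨0, .zero, by rwa [sub_zero]⟩

theorem IsNilClean.map {a : R} (ha : IsNilClean a) (f : R →+* S) : IsNilClean (f a) := by
  obtain ⟨e, he, hn⟩ := ha
  exact ⟨f e, he.map f, map_sub f a e ▸ hn.map f⟩

theorem exists_eq_mul_mul_of_isNilpotent_sub {t e : R} (he : IsIdempotentElem e)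
    (hn : IsNilpotent (t - e)) : ∃ v, e = v * t * e := by
  obtain ⟨v, hv⟩ := hn.isUnit_one_add.exists_left_inv
  have he' : (1 + (t - e)) * e = t * e := by
    rw [add_mul, sub_mul, he.eq, one_mul, add_sub_cancel]
  exact ⟨v, by rw [mul_assoc, ← he', ← mul_assoc, hv, one_mul]⟩

theorem jacobson_bot_eq_bot_of_isSimpleRing [IsSimpleRing R] :
    (⊥ : TwoSidedIdeal R).jacobson = ⊥ := by
  refine (eq_bot_or_eq_top _).resolve_right fun h => ?_
  have h_one : (1 : R) ∈ (⊥ : TwoSidedIdeal R).jacobson := h ▸ trivial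
  obtain ⟨w, hw⟩ := TwoSidedIdeal.mem_jacobson_iff.1 h_one (-1)
  simp at hw

theorem mem_sqrtJ_iff_isNilpotent [IsSimpleRing R] {z : R} : z ∈ sqrtJ R ↔ IsNilpotent z := by
  simp only [sqrtJ, jacobson_bot_eq_bot_of_isSimpleRing, TwoSidedIdeal.mem_bot, Set.mem_ofPred_eq]
  exact ⟨fun ⟨k, _, hk⟩ => ⟨k, hk⟩,
    fun ⟨k, hk⟩ => ⟨k + 1, k.succ_pos, by rw [pow_succ, hk, zero_mul]⟩⟩

theorem isSqrtJCleanRing_iff_forall_isNilClean [IsSimpleRing R] :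
    IsSqrtJCleanRing R ↔ ∀ a : R, IsNilClean a := by
  refine forall_congr' fun a => ⟨?_, ?_⟩
  · rintro ⟨e, z, he, hz, rfl⟩
    exact ⟨e, he, by rwa [add_sub_cancel_left, ← mem_sqrtJ_iff_isNilpotent]⟩
  · rintro ⟨e, he, hn⟩
    exact ⟨e, a - e, he, mem_sqrtJ_iff_isNilpotent.2 hn, (add_sub_cancel e a).symm⟩

end NilClean

section DivisionRing

open Matrix

variable {R D ι κ : Type*} [Fintype ι]

theorem dotProduct_eq_one_of_isIdempotentElem_vecMulVec [Semiring R] [IsCancelMulZero R]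
    {v p : ι → R} (h : IsIdempotentElem (vecMulVec v p)) (h_ne : vecMulVec v p ≠ 0) :
    p ⬝ᵥ v = 1 := by
  obtain ⟨i, j, hij⟩ : ∃ i j, vecMulVec v p i j ≠ 0 := by
    contrapose! h_ne
    exact Matrix.ext h_ne
  have h_entry : v i * ((p ⬝ᵥ v) * p j) = v i * (1 * p j) := by
    simpa only [vecMulVec_mul_vecMulVec, vecMulVec_apply, Pi.smul_apply, smul_eq_mul, one_mul]
      using congrFun₂ h.eq i j
  exact mul_right_cancel₀ (right_ne_zero_of_mul hij)
    (mul_left_cancel₀ (left_ne_zero_of_mul hij) h_entry)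

variable [DecidableEq ι]

theorem isNilpotent_matrix_mul_swap [Semiring R] [Fintype κ] [DecidableEq κ]
    {B : Matrix ι κ R} {C : Matrix κ ι R} (h : IsNilpotent (B * C)) : IsNilpotent (C * B) := by
  have pow_swap (k : ℕ) : (C * B) ^ (k + 1) = C * (B * C) ^ k * B := by
    induction k with
    | zero => simp
    | succ k ih => rw [pow_succ, ih, pow_succ]; simp only [Matrix.mul_assoc]
  obtain ⟨k, hk⟩ := h
  exact ⟨k + 1, by rw [pow_swap, hk, Matrix.mul_zero, Matrix.zero_mul]⟩

theorem pow_finrank_eq_zero_of_isNilpotent {V : Type*} [DivisionRing D] [AddCommGroup V]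
    [Module D V] [FiniteDimensional D V] {f : Module.End D V} (hf : IsNilpotent f) :
    f ^ Module.finrank D V = 0 := by
  obtain ⟨k, hk⟩ := hf
  refine LinearMap.ker_eq_top.1 (top_le_iff.1 ?_)
  exact (LinearMap.ker_eq_top.2 hk).ge.trans (Module.End.ker_pow_le_ker_pow_finrank f k)

theorem toLinearMapRight'_pow [Semiring R] (M : Matrix ι ι R) (k : ℕ) :
    toLinearMapRight' (M ^ k) = (toLinearMapRight' M : Module.End R (ι → R)) ^ k := by
  induction k with
  | zero => rw [pow_zero, pow_zero, toLinearMapRight'_one, Module.End.one_eq_id]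
  | succ k ih => rw [pow_succ, pow_succ', toLinearMapRight'_mul, ih, Module.End.mul_eq_comp]

theorem matrix_pow_card_eq_zero_of_isNilpotent [DivisionRing D] {M : Matrix ι ι D}
    (hM : IsNilpotent M) : M ^ Fintype.card ι = 0 := by
  have hf : IsNilpotent (toLinearMapRight' M : Module.End D (ι → D)) := by
    obtain ⟨k, hk⟩ := hM
    exact ⟨k, by rw [← toLinearMapRight'_pow, hk, map_zero]⟩
  apply toLinearMapRight'.injective
  rw [toLinearMapRight'_pow, map_zero, ← Module.finrank_fintype_fun_eq_card D]
  exact pow_finrank_eq_zero_of_isNilpotent hf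

theorem isNilpotent_fin_two_of_isNilpotent_vecMulVec_sub [Ring R] {u q v p : ι → R}
    (h : IsNilpotent (vecMulVec u q - vecMulVec v p)) :
    IsNilpotent !![q ⬝ᵥ u, q ⬝ᵥ v; -(p ⬝ᵥ u), -(p ⬝ᵥ v)] := by
  let B : Matrix ι (Fin 2) R := of fun i => ![u i, v i]
  let C : Matrix (Fin 2) ι R := of ![q, -p]
  have hBC : B * C = vecMulVec u q - vecMulVec v p := by
    ext i j
    simp [B, C, mul_apply, Fin.sum_univ_two, vecMulVec_apply, sub_eq_add_neg]
  have hCB : C * B = !![q ⬝ᵥ u, q ⬝ᵥ v; -(p ⬝ᵥ u), -(p ⬝ᵥ v)] := by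
    ext i j
    fin_cases i <;> fin_cases j <;> simp [B, C, mul_apply, dotProduct]
  exact hCB ▸ isNilpotent_matrix_mul_swap (hBC ▸ h)

theorem dotProduct_eq_zero_or_one_of_isNilClean_vecMulVec [DivisionRing D] {u q : ι → D}
    (h : IsNilClean (vecMulVec u q)) : q ⬝ᵥ u = 0 ∨ q ⬝ᵥ u = 1 := by
  obtain ⟨e, he, hn⟩ := h
  obtain ⟨v, p, rfl⟩ : ∃ v p, e = vecMulVec v p := by
    obtain ⟨w, hw⟩ := exists_eq_mul_mul_of_isNilpotent_sub he hn
    exact ⟨w *ᵥ u, q ᵥ* e, by rwa [mul_vecMulVec, vecMulVec_mul] at hw⟩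
  have h_sq := matrix_pow_card_eq_zero_of_isNilpotent
    (isNilpotent_fin_two_of_isNilpotent_vecMulVec_sub hn)
  rw [Fintype.card_fin, sq] at h_sq
  by_cases h_zero : vecMulVec v p = 0
  · left
    rcases vecMulVec_eq_zero.1 h_zero with rfl | rfl <;> simpa using congrFun₂ h_sq 0 0
  · right
    rw [dotProduct_eq_one_of_isIdempotentElem_vecMulVec he h_zero] at h_sq
    have h01 : (q ⬝ᵥ u) * (q ⬝ᵥ v) - q ⬝ᵥ v = 0 := by
      simpa [← sub_eq_add_neg] using congrFun₂ h_sq 0 1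
    have h11 : 1 - (p ⬝ᵥ u) * (q ⬝ᵥ v) = 0 := by
      simpa [neg_add_eq_sub] using congrFun₂ h_sq 1 1
    have hqv : q ⬝ᵥ v ≠ 0 := right_ne_zero_of_mul_eq_one (sub_eq_zero.1 h11).symm
    exact (mul_eq_right₀ hqv).1 (sub_eq_zero.1 h01)

theorem eq_zero_or_one_of_forall_isNilClean_matrix [DivisionRing D] [Nonempty ι]
    (h : ∀ A : Matrix ι ι D, IsNilClean A) (a : D) : a = 0 ∨ a = 1 := by
  let i : ι := Classical.arbitrary ι
  simpa using dotProduct_eq_zero_or_one_of_isNilClean_vecMulVec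
    (h (vecMulVec (Pi.single i a) (Pi.single i 1)))

theorem nonempty_ringEquiv_zmod_two_of_forall_eq_zero_or_one [Ring R] [Nontrivial R]
    (h : ∀ a : R, a = 0 ∨ a = 1) : Nonempty (R ≃+* ZMod 2) := by
  classical
  let _ : Fintype R := ⟨{0, 1}, by simpa using h⟩
  have h_card : Fintype.card R = 2 := Finset.card_pair zero_ne_one
  exact ⟨(ZMod.ringEquivOfPrime R Nat.prime_two h_card).symm⟩

end DivisionRing

section LinearMaps

variable {R M : Type*} [Ring R] [AddCommGroup M] [Module R M]

theorem isNilpotent_of_shift {N : Module.End R M} {f : ℕ → M} {n : ℕ}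
    (hN : ∀ i < n, N (f i) = f (i + 1)) (hn : f n = 0)
    (h_span : Submodule.span R (f '' Set.Iio n) = ⊤) : IsNilpotent N := by
  have h_pow (i j : ℕ) (hij : i + j ≤ n) : (N ^ j) (f i) = f (i + j) := by
    induction j with
    | zero => rfl
    | succ j ih => rw [pow_succ', Module.End.mul_apply, ih (by omega), hN _ (by omega), add_assoc]
  refine ⟨n, LinearMap.ext_on h_span ?_⟩
  rintro _ ⟨i, hi : i < n, rfl⟩
  refine Module.End.pow_map_zero_of_le (Nat.sub_le n i) ?_
  rw [h_pow i (n - i) (by omega), Nat.add_sub_cancel' hi.le, hn]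

theorem isNilpotent_of_exact {M₁ M₂ : Type*} [AddCommGroup M₁] [Module R M₁] [AddCommGroup M₂]
    [Module R M₂] {f : M₁ →ₗ[R] M} {g : M →ₗ[R] M₂} (hfg : Function.Exact f g)
    {N : Module.End R M} {N₁ : Module.End R M₁} {N₂ : Module.End R M₂}
    (hf : N ∘ₗ f = f ∘ₗ N₁) (hg : N₂ ∘ₗ g = g ∘ₗ N)
    (hN₁ : IsNilpotent N₁) (hN₂ : IsNilpotent N₂) : IsNilpotent N := by
  obtain ⟨k, hk⟩ := hN₁
  obtain ⟨l, hl⟩ := hN₂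
  refine ⟨k + l, LinearMap.ext fun x => ?_⟩
  obtain ⟨y, hy⟩ : ∃ y, f y = (N ^ l) x := by
    refine (hfg _).1 ?_
    rw [← LinearMap.comp_apply, ← Module.End.commute_pow_left_of_commute hg, hl]
    rfl
  rw [pow_add, Module.End.mul_apply, ← hy, ← LinearMap.comp_apply,
    Module.End.commute_pow_left_of_commute hf, hk]
  simp

theorem isNilClean_of_isCompl {p q : Submodule R M} (hpq : IsCompl p q) {T : Module.End R M}
    (hT : ∀ x ∈ p, T x ∈ p) (hp : IsNilClean (T.restrict hT))
    (hq : IsNilClean (q.projectionOnto p hpq.symm ∘ₗ T ∘ₗ q.subtype)) : IsNilClean T := by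
  obtain ⟨E₁, hE₁, hN₁⟩ := hp
  obtain ⟨E₂, hE₂, hN₂⟩ := hq
  set Q := q.projectionOnto p hpq.symm with hQ
  let E : Module.End R M := LinearMap.ofIsCompl hpq (p.subtype ∘ₗ E₁) (q.subtype ∘ₗ E₂)
  have hE_left (x : p) : E x = E₁ x := LinearMap.ofIsCompl_apply_left hpq x
  have hE_right (x : q) : E x = E₂ x := LinearMap.ofIsCompl_apply_right hpq x
  have hQ_left (x : p) : Q x = 0 := Submodule.projectionOnto_apply_right hpq.symm x
  have hQ_right (x : q) : Q x = x := Submodule.projectionOnto_apply_left hpq.symm x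
  have h_sum (x : M) : ∃ y : p, ∃ z : q, (y + z : M) = x := by
    exact ⟨p.projectionOnto q hpq x, Q x, Submodule.projection_add_projection_eq_self hpq x⟩
  have h_exact : Function.Exact p.subtype Q := by
    rw [LinearMap.exact_iff, Submodule.range_subtype, hQ, Submodule.ker_projectionOnto]
  have h_left : (T - E) ∘ₗ p.subtype = p.subtype ∘ₗ (T.restrict hT - E₁) := by
    ext x
    simp [hE_left]
  have h_right : (Q ∘ₗ T ∘ₗ q.subtype - E₂) ∘ₗ Q = Q ∘ₗ (T - E) := by
    ext x
    obtain ⟨y, z, rfl⟩ := h_sum x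
    have hQT : Q (T y) = 0 := hQ_left ⟨T y, hT y y.2⟩
    simp [hE_left, hE_right, hQ_left, hQ_right, hQT]
  refine ⟨E, LinearMap.ext fun x => ?_, isNilpotent_of_exact h_exact h_left h_right hN₁ hN₂⟩
  obtain ⟨y, z, rfl⟩ := h_sum x
  have hE₁_sq : E₁ (E₁ y) = E₁ y := LinearMap.congr_fun hE₁ y
  have hE₂_sq : E₂ (E₂ z) = E₂ z := LinearMap.congr_fun hE₂ z
  simp only [Module.End.mul_apply, map_add, hE_left, hE_right, hE₁_sq, hE₂_sq]

end LinearMaps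

section Cyclic

theorem exists_eq_smul_add_of_mem_span_image_Iio {R M : Type*} [Semiring R] [AddCommMonoid M]
    [Module R M] {e : ℕ → M} {n : ℕ} {x : M} (hx : x ∈ Submodule.span R (e '' Set.Iio n))
    (hx_ne : x ≠ 0) :
    ∃ m < n, ∃ a ≠ (0 : R), ∃ s ∈ Submodule.span R (e '' Set.Iio m), x = a • e m + s := by
  induction n with
  | zero => exact absurd (by simpa using hx) hx_ne
  | succ n ih =>
    rw [← Order.succ_eq_add_one, Order.Iio_succ_eq_insert, Set.image_insert_eq,
      Submodule.mem_span_insert] at hx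
    obtain ⟨a, s, hs, rfl⟩ := hx
    by_cases ha : a = 0
    · obtain ⟨m, hm, h⟩ := ih (by rwa [ha, zero_smul, zero_add])
      exact ⟨m, by omega, h⟩
    · exact ⟨n, n.lt_succ_self, a, ha, s, hs, rfl⟩

theorem exists_linearIndependent_and_mem_span {F V : Type*} [DivisionRing F] [AddCommGroup V]
    [Module F V] [FiniteDimensional F V] (e : ℕ → V) :
    ∃ n, LinearIndependent F (fun i : Fin n => e i) ∧
      e n ∈ Submodule.span F (Set.range fun i : Fin n => e i) := by
  classical
  have h_dep : ∃ n, ¬ LinearIndependent F (fun i : Fin (n + 1) => e i) :=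
    ⟨Module.finrank F V, fun h => by simpa using h.fintype_card_le_finrank⟩
  have h_indep : LinearIndependent F (fun i : Fin (Nat.find h_dep) => e i) := by
    cases h : Nat.find h_dep with
    | zero => exact linearIndependent_empty_type
    | succ m => exact not_not.1 (Nat.find_min h_dep (h ▸ m.lt_succ_self))
  refine ⟨Nat.find h_dep, h_indep, not_not.1 fun h_notMem => Nat.find_spec h_dep ?_⟩
  exact linearIndependent_finSucc'.2 ⟨h_indep, h_notMem⟩

theorem span_image_Iio_le_of_forall_sub_mem {R M : Type*} [Ring R] [AddCommGroup M] [Module R M]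
    {e f : ℕ → M} {n : ℕ} (h : ∀ i < n, e i - f i ∈ Submodule.span R (e '' Set.Iio i)) :
    Submodule.span R (e '' Set.Iio n) ≤ Submodule.span R (f '' Set.Iio n) := by
  induction n with
  | zero => simp
  | succ n ih =>
    have h_le : Submodule.span R (e '' Set.Iio n) ≤ Submodule.span R (f '' Set.Iio (n + 1)) :=
      (ih fun i hi => h i (by omega)).trans
        (Submodule.span_mono (Set.image_mono (Set.Iio_subset_Iio n.le_succ)))
    have h_fn : f n ∈ Submodule.span R (f '' Set.Iio (n + 1)) :=
      Submodule.subset_span ⟨n, n.lt_succ_self, rfl⟩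
    rw [← Order.succ_eq_add_one, Order.Iio_succ_eq_insert, Set.image_insert_eq,
      Submodule.span_insert, sup_le_iff, Submodule.span_singleton_le_iff_mem,
      ← Order.Iio_succ_eq_insert, Order.succ_eq_add_one]
    exact ⟨sub_add_cancel (e n) (f n) ▸ add_mem (h_le (h n n.lt_succ_self)) h_fn, h_le⟩

theorem isNilpotent_sub_of_apply_krylov {R M : Type*} [Ring R] [AddCommGroup M] [Module R M]
    {T E : Module.End R M} {e : ℕ → M} {m r : ℕ} (hT : ∀ i, T (e i) = e (i + 1)) (hmr : m ≤ r)
    (hE_lt : ∀ i < m, E (e i) = 0) (hE_mid : ∀ i, m ≤ i → i < r → E (e i) = e m)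
    (hE_last : E (e r) = e m + (e (r + 1) - e r))
    (h_span : Submodule.span R (e '' Set.Iio (r + 1)) = ⊤) : IsNilpotent (T - E) := by
  let f (i : ℕ) : M := if i ≤ m then e i else if i ≤ r then e i - e (i - 1) else 0
  have hf_le (i : ℕ) (hi : i ≤ m) : f i = e i := if_pos hi
  have hf_succ (i : ℕ) (hmi : m ≤ i) (hir : i < r) : f (i + 1) = e (i + 1) - e i := by
    simp only [f, if_neg (Nat.lt_succ_of_le hmi).not_ge, if_pos (Nat.succ_le_of_lt hir),
      Nat.add_sub_cancel]
  have hf_end : f (r + 1) = 0 := by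
    simp only [f, if_neg (Nat.lt_succ_of_le hmr).not_ge, if_neg r.lt_succ_self.not_ge]
  have hN_mid (i : ℕ) (hmi : m ≤ i) (hir : i < r) : (T - E) (e i) = e (i + 1) - e m := by
    rw [LinearMap.sub_apply, hT, hE_mid i hmi hir]
  have hN_last : (T - E) (e r) = e r - e m := by
    rw [LinearMap.sub_apply, hT, hE_last]
    abel
  refine isNilpotent_of_shift (f := f) (n := r + 1) (fun i hi => ?_) hf_end (top_le_iff.1 ?_)
  · rcases lt_or_ge i m with him | hmi
    · rw [hf_le i him.le, hf_le (i + 1) him, LinearMap.sub_apply, hT, hE_lt i him, sub_zero]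
    have hN_eq : (T - E) (e i) = f (i + 1) + (e i - e m) := by
      rcases Nat.lt_succ_iff_lt_or_eq.1 hi with hir | rfl
      · rw [hN_mid i hmi hir, hf_succ i hmi hir, sub_add_sub_cancel]
      · rw [hN_last, hf_end, zero_add]
    rcases hmi.eq_or_lt with rfl | hmi
    · rw [hf_le m le_rfl, hN_eq, sub_self, add_zero]
    · obtain ⟨j, rfl⟩ := Nat.exists_eq_add_of_lt hmi
      rw [hf_succ _ (by omega) (by omega), map_sub, hN_eq, hN_mid _ (by omega) (by omega),
        add_sub_cancel_right]
  · rw [← h_span]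
    refine span_image_Iio_le_of_forall_sub_mem fun i hi => ?_
    rcases le_or_gt i m with him | hmi
    · rw [hf_le i him, sub_self]
      exact zero_mem _
    · obtain ⟨j, rfl⟩ := Nat.exists_eq_add_of_lt hmi
      rw [hf_succ _ (by omega) (by omega), sub_sub_cancel]
      exact Submodule.subset_span ⟨_, Nat.lt_succ_self _, rfl⟩

variable {V : Type*} [AddCommGroup V] [Module (ZMod 2) V]

theorem isIdempotentElem_of_apply_krylov {E : Module.End (ZMod 2) V} {e : ℕ → V} {m r : ℕ}
    (hmr : m ≤ r) (hE_lt : ∀ i < m, E (e i) = 0) (hE_mid : ∀ i, m ≤ i → i < r → E (e i) = e m)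
    (hE_last : E (e r) = e m + (e (r + 1) - e r))
    (h_span : Submodule.span (ZMod 2) (e '' Set.Iio (r + 1)) = ⊤)
    (h_next : e (r + 1) - e m ∈ Submodule.span (ZMod 2) (e '' Set.Iio m)) :
    IsIdempotentElem E := by
  have hE_next : E (e (r + 1)) = E (e m) := by
    have h_ker : Submodule.span (ZMod 2) (e '' Set.Iio m) ≤ LinearMap.ker E := by
      rw [Submodule.span_le]
      rintro _ ⟨i, hi, rfl⟩
      exact hE_lt i hi
    rw [← sub_eq_zero, ← map_sub]
    exact h_ker h_next
  refine LinearMap.ext_on h_span ?_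
  rintro _ ⟨i, hi : i < r + 1, rfl⟩
  rw [Module.End.mul_apply]
  rcases lt_or_ge i m with him | hmi
  · rw [hE_lt i him, map_zero]
  rcases Nat.lt_succ_iff_lt_or_eq.1 hi with hir | rfl
  · rw [hE_mid i hmi hir, hE_mid m le_rfl (by omega)]
  · conv_lhs => rw [hE_last, map_add, map_sub, hE_next, ZModModule.sub_eq_add, ← add_assoc,
      ZModModule.add_self, zero_add]

theorem isNilClean_of_basis_krylov {T : Module.End (ZMod 2) V} {e : ℕ → V}
    (hT : ∀ i, T (e i) = e (i + 1)) {n : ℕ} (b : Module.Basis (Fin n) (ZMod 2) V)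
    (hb : ∀ i, b i = e i) : IsNilClean T := by
  have h_span : Submodule.span (ZMod 2) (e '' Set.Iio n) = ⊤ := by
    rw [← b.span_eq, funext hb, ← Fin.range_val, ← Set.range_comp]
    rfl
  by_cases h_zero : e n = 0
  · exact .of_isNilpotent (isNilpotent_of_shift (fun i _ => hT i) h_zero h_span)
  obtain ⟨m, hm, a, ha, s, hs, h_next⟩ :=
    exists_eq_smul_add_of_mem_span_image_Iio (h_span ▸ Submodule.mem_top) h_zero
  obtain rfl : a = 1 := (by decide : ∀ a : ZMod 2, a ≠ 0 → a = 1) a ha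
  rw [one_smul] at h_next
  obtain ⟨r, rfl⟩ : ∃ r, n = r + 1 := ⟨n - 1, by omega⟩
  let g (i : ℕ) : V := if i < m then 0 else if i < r then e m else e m + (e (r + 1) - e r)
  let E : Module.End (ZMod 2) V := b.constr (ZMod 2) fun i => g i
  have hE (i : ℕ) (hi : i < r + 1) : E (e i) = g i :=
    hb ⟨i, hi⟩ ▸ b.constr_basis (ZMod 2) (fun i => g i) ⟨i, hi⟩
  have hmr : m ≤ r := Nat.le_of_lt_succ hm
  have hE_lt (i : ℕ) (hi : i < m) : E (e i) = 0 := by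
    rw [hE i (by omega)]
    exact if_pos hi
  have hE_mid (i : ℕ) (hmi : m ≤ i) (hir : i < r) : E (e i) = e m := by
    simp only [hE i (by omega), g, if_neg hmi.not_gt, if_pos hir]
  have hE_last : E (e r) = e m + (e (r + 1) - e r) := by
    simp only [hE r r.lt_succ_self, g, if_neg hmr.not_gt, if_neg (lt_irrefl r)]
  have h_next_mem : e (r + 1) - e m ∈ Submodule.span (ZMod 2) (e '' Set.Iio m) := by
    rwa [h_next, add_sub_cancel_left]
  exact ⟨E, isIdempotentElem_of_apply_krylov hmr hE_lt hE_mid hE_last h_span h_next_mem,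
    isNilpotent_sub_of_apply_krylov hT hmr hE_lt hE_mid hE_last h_span⟩

theorem exists_invariant_submodule_isNilClean_restrict [FiniteDimensional (ZMod 2) V]
    (T : Module.End (ZMod 2) V) (v : V) :
    ∃ (p : Submodule (ZMod 2) V) (hT : ∀ x ∈ p, T x ∈ p), v ∈ p ∧ IsNilClean (T.restrict hT) := by
  let e (i : ℕ) : V := (T ^ i) v
  have he (i : ℕ) : T (e i) = e (i + 1) := by
    rw [← Module.End.mul_apply, ← pow_succ']
  obtain ⟨n, h_indep, h_mem⟩ := exists_linearIndependent_and_mem_span (F := ZMod 2) e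
  set p := Submodule.span (ZMod 2) (Set.range fun i : Fin n => e i) with hp
  have hep_le (i : ℕ) (hi : i ≤ n) : e i ∈ p := by
    rcases hi.lt_or_eq with hin | rfl
    · exact Submodule.subset_span ⟨⟨i, hin⟩, rfl⟩
    · exact h_mem
  have hT : ∀ x ∈ p, T x ∈ p := by
    change p ≤ p.comap T
    conv_lhs => rw [hp]
    rw [Submodule.span_le]
    rintro _ ⟨i, rfl⟩
    change T (e i) ∈ p
    rw [he]
    exact hep_le _ i.2
  have hep (i : ℕ) : e i ∈ p := by
    induction i with
    | zero => exact hep_le 0 n.zero_le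
    | succ i ih => exact he i ▸ hT _ ih
  refine ⟨p, hT, hep 0, isNilClean_of_basis_krylov (e := fun i => ⟨e i, hep i⟩)
    (fun i => Subtype.ext (he i)) (Module.Basis.span h_indep)
    fun i => Subtype.ext (Module.Basis.coe_span_apply h_indep i)⟩

end Cyclic

theorem isNilClean_end_zmod_two {V : Type*} [AddCommGroup V] [Module (ZMod 2) V]
    [FiniteDimensional (ZMod 2) V] (T : Module.End (ZMod 2) V) : IsNilClean T := by
  induction h_dim : Module.finrank (ZMod 2) V using Nat.strong_induction_on generalizing V with
  | _ d ih =>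
    subst h_dim
    rcases subsingleton_or_nontrivial V with _ | _
    · exact Subsingleton.elim 0 T ▸ .of_isNilpotent .zero
    obtain ⟨v, hv⟩ := exists_ne (0 : V)
    obtain ⟨p, hT, hvp, hp⟩ := exists_invariant_submodule_isNilClean_restrict T v
    obtain ⟨q, hpq⟩ := p.exists_isCompl
    have h_pos : 0 < Module.finrank (ZMod 2) p :=
      Module.finrank_pos_iff_exists_ne_zero.2 ⟨⟨v, hvp⟩, by simpa using hv⟩
    have h_lt : Module.finrank (ZMod 2) q < Module.finrank (ZMod 2) V := by
      have := Submodule.finrank_add_eq_of_isCompl hpq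
      omega
    exact isNilClean_of_isCompl hpq hT hp (ih _ h_lt _ rfl)

theorem isNilClean_matrix_of_ringEquiv_zmod_two {R ι : Type*} [Ring R] [Fintype ι]
    [DecidableEq ι] (f : R ≃+* ZMod 2) (A : Matrix ι ι R) : IsNilClean A := by
  let g : Matrix ι ι R ≃+* Module.End (ZMod 2) (ι → ZMod 2) :=
    f.mapMatrix.trans (Matrix.toLinAlgEquiv' (R := ZMod 2) (n := ι)).toRingEquiv
  simpa using (isNilClean_end_zmod_two (g A)).map (g.symm : _ →+* Matrix ι ι R)

theorem matrix_divisionRing_sqrtJClean_iff_general (D ι : Type*) [DivisionRing D] [Fintype ι]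
    [DecidableEq ι] [Nonempty ι] :
    IsSqrtJCleanRing (Matrix ι ι D) ↔ Nonempty (D ≃+* ZMod 2) := by
  rw [isSqrtJCleanRing_iff_forall_isNilClean]
  refine ⟨fun h => ?_, fun ⟨f⟩ => isNilClean_matrix_of_ringEquiv_zmod_two f⟩
  exact nonempty_ringEquiv_zmod_two_of_forall_eq_zero_or_one
    (eq_zero_or_one_of_forall_isNilClean_matrix h)

theorem matrix_divisionRing_sqrtJClean_iff (D : Type*) [DivisionRing D]
    (n : ℕ) (hn : 1 ≤ n) :
    IsSqrtJCleanRing (Matrix (Fin n) (Fin n) D) ↔ Nonempty (D ≃+* ZMod 2) := by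
  have : Nonempty (Fin n) := ⟨⟨0, hn⟩⟩
  exact matrix_divisionRing_sqrtJClean_iff_general D (Fin n)
end

section
/- Let R be a ring and M an (R,R)-bimodule. The trivial extension T(R,M) = R ∝ M (the ring of pairs (a, m) with componentwise addition and multiplication (r₁, m₁)(r₂, m₂) = (r₁r₂, r₁m₂ + m₁r₂)) is a √J-clean ring if and only if R is a √J-clean ring. -/
/-!
The projection `R ∝ M → R` is surjective and its kernel `0 ∝ M` squares to zero. For any surjective
ring homomorphism with nil kernel, the kernel lies in the Jacobson radical, so membership in `√J`
can be tested on the image, and idempotents lift. Given a decomposition `f a = e + z` and a lift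
`e'` of `e`, the remainder `a - e'` lies over `z`, hence in `√J`.
-/

section SurjectiveHom

variable {R S : Type*} [Ring R] [Ring S]

theorem ideal_le_ringJacobson_of_forall_isNilpotent {I : Ideal R} (hI : ∀ x ∈ I, IsNilpotent x) :
    I ≤ Ring.jacobson R := by
  intro x hx
  rw [← Ideal.jacobson_bot, Ideal.mem_jacobson_iff]
  intro y
  obtain ⟨z, hz⟩ := (hI _ (I.mul_mem_left y hx)).isUnit_one_add.exists_left_inv
  exact ⟨z, by rw [Ideal.mem_bot, sub_eq_zero, ← hz, mul_add, mul_one, mul_assoc, add_comm]⟩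

theorem map_mem_ringJacobson_iff {f : R →+* S} (hf : Function.Surjective f)
    (hker : RingHom.ker f ≤ Ring.jacobson R) {x : R} :
    f x ∈ Ring.jacobson S ↔ x ∈ Ring.jacobson R := by
  have : RingHomSurjective f := ⟨hf⟩
  have h_comap : Submodule.comap f.toSemilinearMap (Ring.jacobson S) = Ring.jacobson R :=
    Module.comap_jacobson_of_ker_le (f := f.toSemilinearMap) hf hker
  exact SetLike.ext_iff.mp h_comap x

theorem mem_sqrtJ_iff {z : R} : z ∈ sqrtJ R ↔ ∃ n : ℕ, 1 ≤ n ∧ z ^ n ∈ Ring.jacobson R := by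
  simp only [sqrtJ, Set.mem_ofPred_eq, TwoSidedIdeal.mem_jacobson_iff, TwoSidedIdeal.mem_bot,
    ← Ideal.jacobson_bot, Ideal.mem_jacobson_iff, Ideal.mem_bot]

theorem map_mem_sqrtJ {f : R →+* S} (hf : Function.Surjective f) {z : R} (hz : z ∈ sqrtJ R) :
    f z ∈ sqrtJ S := by
  have : RingHomSurjective f := ⟨hf⟩
  obtain ⟨n, hn, hzn⟩ := mem_sqrtJ_iff.mp hz
  exact mem_sqrtJ_iff.mpr ⟨n, hn, map_pow f z n ▸ Ring.le_comap_jacobson f hzn⟩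

theorem map_mem_sqrtJ_iff {f : R →+* S} (hf : Function.Surjective f)
    (hker : RingHom.ker f ≤ Ring.jacobson R) {z : R} : f z ∈ sqrtJ S ↔ z ∈ sqrtJ R := by
  simp only [mem_sqrtJ_iff, ← map_pow, map_mem_ringJacobson_iff hf hker]

namespace IsSqrtJCleanRing

theorem of_surjective {f : R →+* S} (hf : Function.Surjective f) (hR : IsSqrtJCleanRing R) :
    IsSqrtJCleanRing S := by
  intro b
  obtain ⟨a, rfl⟩ := hf b
  obtain ⟨e, z, he, hz, rfl⟩ := hR a
  exact ⟨f e, f z, he.map f, map_mem_sqrtJ hf hz, map_add f e z⟩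

theorem of_ker_le_of_idempotents_lift {f : R →+* S} (hf : Function.Surjective f)
    (hker : RingHom.ker f ≤ Ring.jacobson R)
    (hlift : ∀ e : S, IsIdempotentElem e → ∃ e' : R, IsIdempotentElem e' ∧ f e' = e)
    (hS : IsSqrtJCleanRing S) : IsSqrtJCleanRing R := by
  intro a
  obtain ⟨e, z, he, hz, haz⟩ := hS (f a)
  obtain ⟨e', he', rfl⟩ := hlift e he
  have h_rem : f (a - e') = z := by rw [map_sub, haz, add_sub_cancel_left]
  exact ⟨e', a - e', he', (map_mem_sqrtJ_iff hf hker).mp (h_rem ▸ hz),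
    (add_sub_cancel e' a).symm⟩

end IsSqrtJCleanRing

theorem isSqrtJCleanRing_iff_of_ker_isNilpotent {f : R →+* S} (hf : Function.Surjective f)
    (hker : ∀ x ∈ RingHom.ker f, IsNilpotent x) : IsSqrtJCleanRing R ↔ IsSqrtJCleanRing S :=
  ⟨.of_surjective hf, .of_ker_le_of_idempotents_lift hf
    (ideal_le_ringJacobson_of_forall_isNilpotent hker) fun e ↦
      exists_isIdempotentElem_eq_of_ker_isNilpotent f hker e (hf e)⟩

end SurjectiveHom

theorem isNilpotent_of_trivSqZeroExt_fst_eq_zero {R M : Type*} [Semiring R] [AddCommMonoid M]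
    [Module R M] [Module Rᵐᵒᵖ M] [SMulCommClass R Rᵐᵒᵖ M] {x : TrivSqZeroExt R M}
    (hx : x.fst = 0) : IsNilpotent x := by
  refine ⟨2, ?_⟩
  ext <;> simp [pow_two, hx]

theorem trivialExtension_sqrtJClean_iff (R M : Type*) [Ring R]
    [AddCommGroup M] [Module R M] [Module Rᵐᵒᵖ M] [SMulCommClass R Rᵐᵒᵖ M] :
    IsSqrtJCleanRing (TrivSqZeroExt R M) ↔ IsSqrtJCleanRing R := by
  exact isSqrtJCleanRing_iff_of_ker_isNilpotent (f := (TrivSqZeroExt.fstHom ℤ R M).toRingHom)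
    TrivSqZeroExt.fst_surjective fun _ ↦ isNilpotent_of_trivSqZeroExt_fst_eq_zero
end
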